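/- A signature function σ on the triples of [n] can be realized as the signature function of a semisimple x-monotone drawing of K_n if and only if σ is admissible, i.e., every 4-tuple a < b < c < d is of one of the ten forms ++++, −−−−, ++−−, −−++, −++−, +−−+, −−−+, +++−, +−−−, −+++ in σ. -/

import Mathlib

/-- `Zval n` is Hill's conjectured value
`Z(n) = (1/4)⌊n/2⌋⌊(n−1)/2⌋⌊(n−2)/2⌋⌊(n−3)/2⌋` for the crossing number of `K n`.
(The product of the four floors is always divisible by 4, so natural division is exact.) -/
def Zval (n : ℕ) : ℕ :=
  n / 2 * ((n - 1) / 2) * ((n - 2) / 2) * ((n - 3) / 2) / 4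

/-- An x-monotone drawing of the complete graph `K n`: vertices `v i = (x i, 0)` with
`x` strictly increasing, and for each pair `i < j` a continuous function `e i j` on
`[x i, x j]` vanishing at the endpoints, whose graph is the arc of the edge `{i, j}`.
Edges avoid the intermediate vertices, any two distinct edges meet in finitely many
interior parameters, and at each such common point the difference changes sign
(a proper crossing). -/
structure XMonotoneDrawing (n : ℕ) where
  x : Fin n → ℝ
  x_strictMono : StrictMono x
  e : Fin n → Fin n → ℝ → ℝ
  cont : ∀ i j : Fin n, i < j → ContinuousOn (e i j) (Set.Icc (x i) (x j))
  end_left : ∀ i j : Fin n, i < j → e i j (x i) = 0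
  end_right : ∀ i j : Fin n, i < j → e i j (x j) = 0
  avoid_vertex : ∀ i m j : Fin n, i < m → m < j → e i j (x m) ≠ 0
  cross_finite : ∀ i j k l : Fin n, i < j → k < l → (i, j) ≠ (k, l) →
    {t : ℝ | max (x i) (x k) < t ∧ t < min (x j) (x l) ∧ e i j t = e k l t}.Finite
  sign_change : ∀ i j k l : Fin n, i < j → k < l → (i, j) ≠ (k, l) →
    ∀ t : ℝ, max (x i) (x k) < t → t < min (x j) (x l) → e i j t = e k l t →
      ∃ ε > (0 : ℝ), ∀ s : ℝ, max (x i) (x k) < s → t - ε < s → s < t →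
        ∀ u : ℝ, u < min (x j) (x l) → t < u → u < t + ε →
          (e i j s - e k l s) * (e i j u - e k l u) < 0

namespace XMonotoneDrawing

variable {n : ℕ}

/-- The set of parameters at which the edges `{i,j}` and `{k,l}` cross
(both edges are parametrized over the `x`-axis). -/
def crossSet (D : XMonotoneDrawing n) (i j k l : Fin n) : Set ℝ :=
  {t : ℝ | max (D.x i) (D.x k) < t ∧ t < min (D.x j) (D.x l) ∧ D.e i j t = D.e k l t}

/-- The number of crossings between the edges `{i,j}` and `{k,l}`. -/
noncomputable def crossCount (D : XMonotoneDrawing n) (i j k l : Fin n) : ℕ :=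
  (D.crossSet i j k l).ncard

/-- Two edges `{i,j}` and `{k,l}` are adjacent if they share an endpoint index. -/
def Adj (i j k l : Fin n) : Prop := i = k ∨ i = l ∨ j = k ∨ j = l

/-- A drawing is semisimple if no two adjacent edges cross. -/
def Semisimple (D : XMonotoneDrawing n) : Prop :=
  ∀ i j k l : Fin n, i < j → k < l → (i, j) ≠ (k, l) → Adj i j k l →
    D.crossCount i j k l = 0

/-- A drawing is weakly semisimple if every two adjacent edges cross an even
number of times. -/
def WeaklySemisimple (D : XMonotoneDrawing n) : Prop :=
  ∀ i j k l : Fin n, i < j → k < l → (i, j) ≠ (k, l) → Adj i j k l →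
    Even (D.crossCount i j k l)

/-- A drawing is simple if no two adjacent edges cross and every two non-adjacent
edges cross at most once. -/
def Simple (D : XMonotoneDrawing n) : Prop :=
  ∀ i j k l : Fin n, i < j → k < l → (i, j) ≠ (k, l) →
    (Adj i j k l → D.crossCount i j k l = 0) ∧
    (¬ Adj i j k l → D.crossCount i j k l ≤ 1)

/-- `cr D`: the total number of crossings of `D`. (Each unordered pair of distinct
edges is counted twice in the sum, whence the division by 2; `crossCount` is
symmetric in the two edges.) -/
noncomputable def cr (D : XMonotoneDrawing n) : ℕ :=
  (∑ p : (Fin n × Fin n) × (Fin n × Fin n),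
      if p.1.1 < p.1.2 ∧ p.2.1 < p.2.2 ∧ p.1 ≠ p.2 then
        D.crossCount p.1.1 p.1.2 p.2.1 p.2.2
      else 0) / 2

/-- `ocr D`: the number of unordered pairs of edges of `D` crossing an odd number
of times. (Each unordered pair appears twice as an ordered pair.) -/
noncomputable def ocr (D : XMonotoneDrawing n) : ℕ :=
  {p : (Fin n × Fin n) × (Fin n × Fin n) |
    p.1.1 < p.1.2 ∧ p.2.1 < p.2.2 ∧ p.1 ≠ p.2 ∧
      Odd (D.crossCount p.1.1 p.1.2 p.2.1 p.2.2)}.ncard / 2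

/-- The signature of the triple `i < j < k`: `true` (i.e. `+`) if the vertex `v j`
lies below the edge `{i, k}`, i.e. `e i k (x j) > 0`, and `false` (i.e. `−`) otherwise. -/
noncomputable def sig (D : XMonotoneDrawing n) (i j k : Fin n) : Bool :=
  if 0 < D.e i k (D.x j) then true else false

/-- `D` realizes the signature function `σ` if `σ_D` and `σ` agree on all
increasing triples. -/
def Realizes (D : XMonotoneDrawing n) (σ : Fin n → Fin n → Fin n → Bool) : Prop :=
  ∀ i j k : Fin n, i < j → j < k → D.sig i j k = σ i j k

/-- A drawing is pseudolinear if its edges extend to continuous curves over all of `ℝ`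
that avoid all vertices other than their endpoints and such that any two of these
extended curves cross exactly once (the crossing being a sign change of the difference). -/
def Pseudolinear (D : XMonotoneDrawing n) : Prop :=
  ∃ p : Fin n → Fin n → ℝ → ℝ,
    (∀ i j : Fin n, i < j → Continuous (p i j)) ∧
    (∀ i j : Fin n, i < j → ∀ t ∈ Set.Icc (D.x i) (D.x j), p i j t = D.e i j t) ∧
    (∀ i j m : Fin n, i < j → m ≠ i → m ≠ j → p i j (D.x m) ≠ 0) ∧
    (∀ i j k l : Fin n, i < j → k < l → (i, j) ≠ (k, l) →
      ∃ t : ℝ, p i j t = p k l t ∧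
        ∀ s u : ℝ, s < t → t < u →
          (p i j s - p k l s) * (p i j u - p k l u) < 0)

/-- The arc of the edge `{i, j}` as a subset of the plane `ℝ × ℝ`. -/
def edgeArc (D : XMonotoneDrawing n) (i j : Fin n) : Set (ℝ × ℝ) :=
  {q : ℝ × ℝ | D.x i ≤ q.1 ∧ q.1 ≤ D.x j ∧ q.2 = D.e i j q.1}

/-- The union of all edge arcs of the drawing. -/
def arcUnion (D : XMonotoneDrawing n) : Set (ℝ × ℝ) :=
  ⋃ i : Fin n, ⋃ j : Fin n, ⋃ (_ : i < j), D.edgeArc i j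

end XMonotoneDrawing

namespace Sig

variable {n : ℕ}

/-- With respect to a signature function `σ`, the vertex `m ∉ {i, j}` is on the left of
the directed edge `(i, j)` (where `i < j`). -/
def LeftOf (σ : Fin n → Fin n → Fin n → Bool) (i j m : Fin n) : Prop :=
  (i < m ∧ m < j ∧ σ i m j = false) ∨ (m < i ∧ σ m i j = true) ∨ (j < m ∧ σ i j m = true)

/-- The number of vertices on the left of the directed edge `(i, j)`. -/
noncomputable def leftCount (σ : Fin n → Fin n → Fin n → Bool) (i j : Fin n) : ℕ :=
  {m : Fin n | LeftOf σ i j m}.ncard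

/-- The edge `{i, j}` (with `i < j`) is a `k`-edge of `σ` if `min(ℓ, n − 2 − ℓ) = k`,
where `ℓ` is the number of vertices on its left. -/
def IsKEdge (σ : Fin n → Fin n → Fin n → Bool) (k : ℕ) (i j : Fin n) : Prop :=
  min (leftCount σ i j) (n - 2 - leftCount σ i j) = k

/-- `Ek σ k`: the number of `k`-edges of `σ`. -/
noncomputable def Ek (σ : Fin n → Fin n → Fin n → Bool) (k : ℕ) : ℕ :=
  {p : Fin n × Fin n | p.1 < p.2 ∧ IsKEdge σ k p.1 p.2}.ncard

/-- `Ele σ k = E_{≤k}(σ)`: the number of `≤k`-edges of `σ`. -/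
noncomputable def Ele (σ : Fin n → Fin n → Fin n → Bool) (k : ℕ) : ℕ :=
  ∑ i ∈ Finset.range (k + 1), Ek σ i

/-- `Elele σ k = E_{≤≤k}(σ) = Σ_{j=0}^{k} E_{≤j}(σ)`. -/
noncomputable def Elele (σ : Fin n → Fin n → Fin n → Bool) (k : ℕ) : ℕ :=
  ∑ j ∈ Finset.range (k + 1), Ele σ j

/-- `E_{≤≤k}` with an integer index, which vanishes for negative `k`. -/
noncomputable def ElelZ (σ : Fin n → Fin n → Fin n → Bool) (k : ℤ) : ℕ :=
  if 0 ≤ k then Elele σ k.toNat else 0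

/-- The left count of the edge `{i, j}` in the drawing restricted to the first
`n − 1` vertices (the last vertex deleted). -/
noncomputable def leftCountRes (σ : Fin n → Fin n → Fin n → Bool) (i j : Fin n) : ℕ :=
  {m : Fin n | LeftOf σ i j m ∧ (m : ℕ) + 1 < n}.ncard

/-- The edge `{i, j}` is a `k`-edge of the restriction of `σ` to the first `n − 1`
vertices (there `min(ℓ', (n−1) − 2 − ℓ') = k`). -/
def IsKEdgeRes (σ : Fin n → Fin n → Fin n → Bool) (k : ℕ) (i j : Fin n) : Prop :=
  min (leftCountRes σ i j) (n - 3 - leftCountRes σ i j) = k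

/-- The edge `{i, j}` is a `(D,D')`-invariant `≤k`-edge: it avoids the last vertex and
is an `m`-edge with `m ≤ k` both in `σ` and in the restriction of `σ` to the first
`n − 1` vertices. -/
def InvariantLeK (σ : Fin n → Fin n → Fin n → Bool) (k : ℕ) (i j : Fin n) : Prop :=
  (j : ℕ) + 1 < n ∧ (∃ m ≤ k, IsKEdge σ m i j) ∧ (∃ m ≤ k, IsKEdgeRes σ m i j)

/-- The ten 4-tuple forms allowed in signature functions of semisimple x-monotone
drawings: `++++, −−−−, ++−−, −−++, −++−, +−−+, −−−+, +++−, +−−−, −+++`. -/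
def AllowedForm (a b c d : Bool) : Prop :=
  (a, b, c, d) ∈ ([(true, true, true, true), (false, false, false, false),
    (true, true, false, false), (false, false, true, true),
    (false, true, true, false), (true, false, false, true),
    (false, false, false, true), (true, true, true, false),
    (true, false, false, false), (false, true, true, true)] :
      List (Bool × Bool × Bool × Bool))

/-- A signature function is admissible if every increasing 4-tuple is of one of the
ten allowed forms. -/
def Admissible (σ : Fin n → Fin n → Fin n → Bool) : Prop :=
  ∀ a b c d : Fin n, a < b → b < c → c < d →
    AllowedForm (σ a b c) (σ a b d) (σ a c d) (σ b c d)

/-- The six convex forms: `++++, −−−−, ++−−, −−++, −++−, +−−+`. -/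
def ConvexForm (a b c d : Bool) : Prop :=
  (a, b, c, d) ∈ ([(true, true, true, true), (false, false, false, false),
    (true, true, false, false), (false, false, true, true),
    (false, true, true, false), (true, false, false, true)] :
      List (Bool × Bool × Bool × Bool))

/-- The 4-tuple `a < b < c < d` is convex in `σ`. -/
def Convex4 (σ : Fin n → Fin n → Fin n → Bool) (a b c d : Fin n) : Prop :=
  ConvexForm (σ a b c) (σ a b d) (σ a c d) (σ b c d)

/-- The eight 4-tuple forms of pseudolinear x-monotone drawings (the sign-monotone
sequences): `++++, +++−, ++−−, +−−−, −−−−, −−−+, −−++, −+++`. -/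
def PLForm (a b c d : Bool) : Prop :=
  (a, b, c, d) ∈ ([(true, true, true, true), (true, true, true, false),
    (true, true, false, false), (true, false, false, false),
    (false, false, false, false), (false, false, false, true),
    (false, false, true, true), (false, true, true, true)] :
      List (Bool × Bool × Bool × Bool))

/-- The relation `j ⋖ k` on `{j : i < j}`: `j ⋖ k` iff (`j < k` and `σ i j k = +`)
or (`k < j` and `σ i k j = −`). -/
def Below (σ : Fin n → Fin n → Fin n → Bool) (i j k : Fin n) : Prop :=
  (j < k ∧ σ i j k = true) ∨ (k < j ∧ σ i k j = false)

end Sig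

/-!
Admissibility says that the first three signs of every 4-tuple avoid `+−+` and `−+−`, and so do
the last three. In a semisimple drawing the sign of `(i, j, k)` records the order of the edges
`ij` and `ik` just to the right of `v i`, and also that of `jk` and `ik` just to the left of `v k`;
the two conditions express that these local orders are transitive.

Conversely, above each vertex `v m` we order the edges by the side on which they pass `v m`,
breaking ties by the side on which they pass `v (m - 1)`, and so on back to their left endpoints,
where edges that are still tied are ordered by the relation `⋖`. Balanced ternary expansions with
the sides as digits turn these lexicographic orders into real heights; interpolating the heights
linearly gives the drawing. By admissibility the order of two adjacent edges is the same at every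
vertex, so that they do not cross.
-/

theorem lt_iff_lt_of_isPreconnected {X α : Type*} [TopologicalSpace X] [LinearOrder α]
    [TopologicalSpace α] [OrderClosedTopology α] {s : Set X} (hs : IsPreconnected s) {f : X → α}
    (hf : ContinuousOn f s) {b : α} (hne : ∀ x ∈ s, f x ≠ b) {x y : X} (hx : x ∈ s) (hy : y ∈ s) :
    b < f x ↔ b < f y :=
  ⟨fun h => hs.lt_of_ne hf hne ⟨x, hx, h⟩ hy, fun h => hs.lt_of_ne hf hne ⟨y, hy, h⟩ hx⟩

theorem eq_of_iff_lt {α : Type*} [LinearOrder α] {p q r : α} {a b c : Bool} (ha : a ↔ p < q)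
    (hb : b ↔ p < r) (hc : c ↔ q < r) (hac : a = c) : b = a := by
  subst hac
  cases a
  · have hqp : q ≤ p := by simpa using ha
    have hrq : r ≤ q := by simpa using hc
    simpa using hb.not.2 (hrq.trans hqp).not_gt
  · exact hb.2 ((ha.1 rfl).trans (hc.1 rfl))

namespace Sig

theorem allowedForm_iff (a b c d : Bool) :
    AllowedForm a b c d ↔ (a = c → b = a) ∧ (b = d → c = b) := by
  unfold AllowedForm
  decide +revert

end Sig

namespace XMonotoneDrawing

variable {n : ℕ} {D : XMonotoneDrawing n}

theorem crossCount_eq_zero_iff {i j k l : Fin n} (hij : i < j) (hkl : k < l)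
    (hne : (i, j) ≠ (k, l)) : D.crossCount i j k l = 0 ↔ D.crossSet i j k l = ∅ :=
  Set.ncard_eq_zero (D.cross_finite i j k l hij hkl hne)

theorem Semisimple.edge_ne (hD : D.Semisimple) {i j k l : Fin n} (hij : i < j) (hkl : k < l)
    (hne : (i, j) ≠ (k, l)) (hadj : Adj i j k l) {t : ℝ} (hleft : max (D.x i) (D.x k) < t)
    (hright : t < min (D.x j) (D.x l)) : D.e i j t ≠ D.e k l t := fun heq =>
  ((crossCount_eq_zero_iff hij hkl hne).1 (hD i j k l hij hkl hne hadj)).le ⟨hleft, hright, heq⟩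

theorem sig_eq_true_iff {i j k : Fin n} : D.sig i j k = true ↔ 0 < D.e i k (D.x j) := by
  simp [sig]

variable {a b c : Fin n} {t : ℝ}

theorem Semisimple.sig_iff_lt_of_common_left (hD : D.Semisimple) (hab : a < b) (hbc : b < c)
    (ht : t ∈ Set.Ioo (D.x a) (D.x b)) : D.sig a b c = true ↔ D.e a b t < D.e a c t := by
  have hac := hab.trans hbc
  have hxbc := D.x_strictMono hbc
  have hcont : ContinuousOn (fun s => D.e a c s - D.e a b s) (Set.Ioc (D.x a) (D.x b)) :=
    ((D.cont a c hac).mono fun s hs => ⟨hs.1.le, hs.2.trans hxbc.le⟩).sub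
      ((D.cont a b hab).mono Set.Ioc_subset_Icc_self)
  have hne : ∀ s ∈ Set.Ioc (D.x a) (D.x b), D.e a c s - D.e a b s ≠ 0 := by
    rintro s ⟨has, hsb⟩
    rcases hsb.eq_or_lt with rfl | hsb
    · simpa [D.end_right a b hab] using D.avoid_vertex a b c hab hbc
    · exact sub_ne_zero.2 <| hD.edge_ne hac hab (by simp [hbc.ne']) (.inl rfl)
        (by simpa using has) (lt_min (hsb.trans hxbc) hsb)
  have hsign := lt_iff_lt_of_isPreconnected isPreconnected_Ioc hcont hne
    (Set.Ioo_subset_Ioc_self ht) (Set.right_mem_Ioc.2 (D.x_strictMono hab))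
  rw [sig_eq_true_iff, ← sub_pos (a := D.e a c t), hsign, D.end_right a b hab, sub_zero]

theorem Semisimple.sig_iff_lt_of_common_right (hD : D.Semisimple) (hab : a < b) (hbc : b < c)
    (ht : t ∈ Set.Ioo (D.x b) (D.x c)) : D.sig a b c = true ↔ D.e b c t < D.e a c t := by
  have hac := hab.trans hbc
  have hxab := D.x_strictMono hab
  have hcont : ContinuousOn (fun s => D.e a c s - D.e b c s) (Set.Ico (D.x b) (D.x c)) :=
    ((D.cont a c hac).mono fun s hs => ⟨hxab.le.trans hs.1, hs.2.le⟩).sub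
      ((D.cont b c hbc).mono Set.Ico_subset_Icc_self)
  have hne : ∀ s ∈ Set.Ico (D.x b) (D.x c), D.e a c s - D.e b c s ≠ 0 := by
    rintro s ⟨hbs, hsc⟩
    rcases hbs.eq_or_lt with rfl | hbs
    · simpa [D.end_left b c hbc] using D.avoid_vertex a b c hab hbc
    · exact sub_ne_zero.2 <| hD.edge_ne hac hbc (by simp [hab.ne]) (.inr (.inr (.inr rfl)))
        (max_lt (hxab.trans hbs) hbs) (by simpa using hsc)
  have hsign := lt_iff_lt_of_isPreconnected isPreconnected_Ico hcont hne
    (Set.Ioo_subset_Ico_self ht) (Set.left_mem_Ico.2 (D.x_strictMono hbc))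
  rw [sig_eq_true_iff, ← sub_pos (a := D.e a c t), hsign, D.end_left b c hbc, sub_zero]

theorem Semisimple.admissible (hD : D.Semisimple) {σ : Fin n → Fin n → Fin n → Bool}
    (hσ : D.Realizes σ) : Sig.Admissible σ := by
  intro a b c d hab hbc hcd
  have hac := hab.trans hbc
  have hbd := hbc.trans hcd
  have hxbc := D.x_strictMono hbc
  rw [← hσ a b c hab hbc, ← hσ a b d hab hbd, ← hσ a c d hac hcd, ← hσ b c d hbc hcd,
    Sig.allowedForm_iff]
  constructor
  · obtain ⟨t, hat, htb⟩ := exists_between (D.x_strictMono hab)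
    exact eq_of_iff_lt (hD.sig_iff_lt_of_common_left hab hbc ⟨hat, htb⟩)
      (hD.sig_iff_lt_of_common_left hab hbd ⟨hat, htb⟩)
      (hD.sig_iff_lt_of_common_left hac hcd ⟨hat, htb.trans hxbc⟩)
  · obtain ⟨t, hct, htd⟩ := exists_between (D.x_strictMono hcd)
    intro heq
    rw [heq]
    exact eq_of_iff_lt (hD.sig_iff_lt_of_common_right hbc hcd ⟨hct, htd⟩)
      (hD.sig_iff_lt_of_common_right hac hcd ⟨hct, htd⟩)
      (hD.sig_iff_lt_of_common_right hab hbd ⟨hxbc.trans hct, htd⟩) heq.symm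

end XMonotoneDrawing

section LinearInterp

open AffineMap

variable {E : Type*} [AddCommGroup E] [Module ℝ E]

/-- The linear interpolation of a sequence `g`, which takes the value `g m` at the natural number
`m` and is affine in between. To the left of `0` it continues the first segment, since there
`⌊t⌋₊ = 0`. -/
noncomputable def linearInterp (g : ℕ → E) (t : ℝ) : E :=
  lineMap (g ⌊t⌋₊) (g (⌊t⌋₊ + 1)) (t - ⌊t⌋₊)

theorem linearInterp_natCast (g : ℕ → E) (m : ℕ) : linearInterp g m = g m := by
  simp [linearInterp]

theorem linearInterp_sub (g h : ℕ → E) (t : ℝ) :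
    linearInterp (fun m => g m - h m) t = linearInterp g t - linearInterp h t := by
  simp only [linearInterp, lineMap_apply_module]
  module

theorem linearInterp_eq_lineMap (g : ℕ → E) {m : ℕ} {t : ℝ} (ht : t ∈ Set.Icc (m : ℝ) (m + 1)) :
    linearInterp g t = lineMap (g m) (g (m + 1)) (t - m) := by
  rcases ht.2.eq_or_lt with rfl | hlt
  · rw [← Nat.cast_add_one, linearInterp_natCast]
    simp
  · have hfloor : ⌊t⌋₊ = m := Nat.floor_eq_on_Ico m t ⟨ht.1, hlt⟩
    rw [linearInterp, hfloor]

theorem continuousOn_linearInterp [TopologicalSpace E] [IsTopologicalAddGroup E]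
    [ContinuousSMul ℝ E] (g : ℕ → E) (N : ℕ) :
    ContinuousOn (linearInterp g) (Set.Icc 0 (N : ℝ)) := by
  induction N with
  | zero => simp
  | succ N ih =>
    have hsegment : ContinuousOn (linearInterp g) (Set.Icc (N : ℝ) (N + 1)) := by
      refine ContinuousOn.congr ?_ fun t ht => linearInterp_eq_lineMap g ht
      exact (lineMap_continuous.comp (continuous_sub_right _)).continuousOn
    rw [Nat.cast_add_one, ← Set.Icc_union_Icc_eq_Icc N.cast_nonneg (by simp : (N : ℝ) ≤ N + 1)]
    exact ih.union_of_isClosed hsegment isClosed_Icc isClosed_Icc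

theorem mul_neg_of_lineMap_eq_zero {K : Type*} [Field K] [LinearOrder K] [IsStrictOrderedRing K]
    {a b θ : K} (hab : a ≠ 0 ∨ b ≠ 0) (hθ : θ ∈ Set.Ioo 0 1) (hzero : lineMap a b θ = 0) :
    a * b < 0 := by
  obtain ⟨hθ₀, hθ₁⟩ := hθ
  have hsum : (1 - θ) * a + θ * b = 0 := by
    rw [lineMap_apply_ring'] at hzero
    linear_combination hzero
  have ha : a ≠ 0 := by
    rintro rfl
    simp_all [hθ₀.ne']
  have hneg : θ * (a * b) < 0 := calc
    θ * (a * b) = -((1 - θ) * (a * a)) := by linear_combination a * hsum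
    _ < 0 := neg_neg_of_pos (mul_pos (sub_pos.2 hθ₁) (mul_self_pos.2 ha))
  exact neg_of_mul_neg_right hneg hθ₀.le

theorem linearInterp_eq_mul_of_eq_zero {d : ℕ → ℝ} {m : ℕ} {s t : ℝ}
    (hs : s ∈ Set.Icc (m : ℝ) (m + 1)) (ht : t ∈ Set.Icc (m : ℝ) (m + 1))
    (hzero : linearInterp d t = 0) : linearInterp d s = (s - t) * (d (m + 1) - d m) := by
  rw [linearInterp_eq_lineMap d ht, lineMap_apply_ring'] at hzero
  rw [linearInterp_eq_lineMap d hs, lineMap_apply_ring']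
  linear_combination hzero

section Zeros

variable {d : ℕ → ℝ} {A B : ℕ} (hinner : ∀ m, A < m → m < B → d m ≠ 0)
  (hends : A < B → d A ≠ 0 ∨ d B ≠ 0) {t : ℝ}

include hinner in
theorem floor_lt_of_linearInterp_eq_zero (ht : t ∈ Set.Ioo (A : ℝ) B)
    (hzero : linearInterp d t = 0) : (⌊t⌋₊ : ℝ) < t := by
  refine (Nat.floor_le (A.cast_nonneg.trans ht.1.le)).lt_of_ne fun heq => ?_
  rw [← heq, linearInterp_natCast] at hzero
  rw [← heq, Set.mem_Ioo, Nat.cast_lt, Nat.cast_lt] at ht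
  exact hinner _ ht.1 ht.2 hzero

include hinner hends

theorem mul_neg_of_linearInterp_eq_zero (ht : t ∈ Set.Ioo (A : ℝ) B)
    (hzero : linearInterp d t = 0) : d ⌊t⌋₊ * d (⌊t⌋₊ + 1) < 0 := by
  have hA : A ≤ ⌊t⌋₊ := Nat.le_floor ht.1.le
  have hB : ⌊t⌋₊ < B := (Nat.floor_lt (A.cast_nonneg.trans ht.1.le)).2 ht.2
  have hlt := floor_lt_of_linearInterp_eq_zero hinner ht hzero
  refine mul_neg_of_lineMap_eq_zero ?_ ⟨sub_pos.2 hlt, ?_⟩ hzero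
  · by_contra! hboth
    have hAeq : ⌊t⌋₊ = A := by
      by_contra hne
      exact hinner _ (by omega) hB hboth.1
    have hBeq : ⌊t⌋₊ + 1 = B := by
      by_contra hne
      exact hinner _ (by omega) (by omega) hboth.2
    rw [hBeq, hAeq] at hboth
    exact (hends (by omega)).elim (· hboth.1) (· hboth.2)
  · linarith [Nat.lt_floor_add_one t]

theorem finite_zeros_linearInterp : {t ∈ Set.Ioo (A : ℝ) B | linearInterp d t = 0}.Finite := by
  refine Set.Finite.of_injOn (f := Nat.floor) (t := Set.Iio B)
    (fun t ht => (Nat.floor_lt (A.cast_nonneg.trans ht.1.1.le)).2 ht.1.2) ?_ (Set.finite_Iio B)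
  rintro s ⟨hs, hs₀⟩ t ⟨ht, ht₀⟩ hfloor
  have hneg := mul_neg_of_linearInterp_eq_zero hinner hends ht ht₀
  have mem_segment {u : ℝ} (hu : (A : ℝ) < u) : u ∈ Set.Icc (⌊u⌋₊ : ℝ) (⌊u⌋₊ + 1) :=
    ⟨Nat.floor_le (A.cast_nonneg.trans hu.le), (Nat.lt_floor_add_one u).le⟩
  have hprod := linearInterp_eq_mul_of_eq_zero (hfloor ▸ mem_segment hs.1) (mem_segment ht.1) ht₀
  rw [hs₀, eq_comm, mul_eq_zero, sub_eq_zero, sub_eq_zero] at hprod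
  refine hprod.resolve_right fun heq => hneg.not_ge ?_
  rw [heq]
  exact mul_self_nonneg _

theorem exists_sign_change_linearInterp (ht : t ∈ Set.Ioo (A : ℝ) B)
    (hzero : linearInterp d t = 0) :
    ∃ ε > 0, ∀ s ∈ Set.Ioo (t - ε) t, ∀ u ∈ Set.Ioo t (t + ε),
      linearInterp d s * linearInterp d u < 0 := by
  have hneg := mul_neg_of_linearInterp_eq_zero hinner hends ht hzero
  have hleft := floor_lt_of_linearInterp_eq_zero hinner ht hzero
  have hright := Nat.lt_floor_add_one t
  generalize ⌊t⌋₊ = m at hneg hleft hright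
  have hslope : d (m + 1) - d m ≠ 0 := fun heq => by
    rw [sub_eq_zero.1 heq] at hneg
    exact hneg.not_ge (mul_self_nonneg _)
  refine ⟨min (t - m) (m + 1 - t), lt_min (by linarith) (by linarith), fun s hs u hu => ?_⟩
  have hεleft := min_le_left (t - m) (m + 1 - t)
  have hεright := min_le_right (t - m) (m + 1 - t)
  have formula {r : ℝ} (hr : r ∈ Set.Icc (m : ℝ) (m + 1)) :=
    linearInterp_eq_mul_of_eq_zero hr ⟨hleft.le, hright.le⟩ hzero
  calc linearInterp d s * linearInterp d u
      = (s - t) * (u - t) * ((d (m + 1) - d m) * (d (m + 1) - d m)) := by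
        rw [formula ⟨by linarith [hs.1], by linarith [hs.2]⟩,
          formula ⟨by linarith [hu.1], by linarith [hu.2]⟩]
        ring
    _ < 0 := mul_neg_of_neg_of_pos (mul_neg_of_neg_of_pos (sub_neg.2 hs.2) (sub_pos.2 hu.1))
        (mul_self_pos.2 hslope)

end Zeros

end LinearInterp

/-- A table of heights of the edges of a drawing of `K n` with vertices `(0, 0), …, (n - 1, 0)`:
the entry `height i j m` is the height of the edge `{i, j}` at the abscissa `m`, and it is relevant
only for `i < j` and `i ≤ m ≤ j`. Distinct edges have distinct heights at the vertices interior to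
both of them. -/
structure HeightTable (n : ℕ) where
  height : Fin n → Fin n → ℕ → ℝ
  height_left : ∀ i j : Fin n, height i j i = 0
  height_right : ∀ i j : Fin n, height i j j = 0
  height_ne_zero : ∀ (i j : Fin n) (m : ℕ), i < m → m < j → height i j m ≠ 0
  height_ne : ∀ (i j k l : Fin n) (m : ℕ), (i, j) ≠ (k, l) → i < m → m < j → k < m → m < l →
    height i j m ≠ height k l m

theorem mem_Ioo_max_min_natCast {a b c d : ℕ} {t : ℝ} (hleft : max (a : ℝ) b < t)
    (hright : t < min (c : ℝ) d) : t ∈ Set.Ioo ((max a b : ℕ) : ℝ) (min c d : ℕ) :=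
  ⟨by rwa [Nat.cast_max], by rwa [Nat.cast_min]⟩

namespace HeightTable

variable {n : ℕ} (T : HeightTable n) {i j k l : Fin n}

theorem sub_ne_zero_of_interior (hne : (i, j) ≠ (k, l)) (m : ℕ) (hleft : max (i : ℕ) k < m)
    (hright : m < min (j : ℕ) l) : T.height i j m - T.height k l m ≠ 0 :=
  sub_ne_zero.2 <| T.height_ne i j k l m hne (by omega) (by omega) (by omega) (by omega)

theorem sub_ne_zero_at_left_or_right (hne : (i, j) ≠ (k, l))
    (hlt : max (i : ℕ) k < min (j : ℕ) l) :
    T.height i j (max (i : ℕ) k) - T.height k l (max (i : ℕ) k) ≠ 0 ∨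
      T.height i j (min (j : ℕ) l) - T.height k l (min (j : ℕ) l) ≠ 0 := by
  rcases lt_trichotomy i k with hik | rfl | hki
  · left
    rw [max_eq_right (Fin.le_def.1 hik.le), T.height_left, sub_zero]
    exact T.height_ne_zero i j k hik (by omega)
  · right
    rcases lt_trichotomy j l with hjl | rfl | hlj
    · rw [min_eq_left (Fin.le_def.1 hjl.le), T.height_right, zero_sub, neg_ne_zero]
      exact T.height_ne_zero i l j (by omega) hjl
    · exact absurd rfl hne
    · rw [min_eq_right (Fin.le_def.1 hlj.le), T.height_right, sub_zero]
      exact T.height_ne_zero i j l (by omega) hlj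
  · left
    rw [max_eq_left (Fin.le_def.1 hki.le), T.height_left, zero_sub, neg_ne_zero]
    exact T.height_ne_zero k l i hki (by omega)

/-- The piecewise linear drawing with the given heights. -/
noncomputable def drawing : XMonotoneDrawing n where
  x i := (i : ℕ)
  x_strictMono _ _ hij := Nat.cast_lt.2 hij
  e i j := linearInterp (T.height i j)
  cont i j _ := (continuousOn_linearInterp _ j).mono (Set.Icc_subset_Icc_left (Nat.cast_nonneg _))
  end_left i j _ := by rw [linearInterp_natCast, T.height_left]
  end_right i j _ := by rw [linearInterp_natCast, T.height_right]
  avoid_vertex i m j him hmj := by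
    rw [linearInterp_natCast]
    exact T.height_ne_zero i j m him hmj
  cross_finite i j k l _ _ hne :=
    (finite_zeros_linearInterp (T.sub_ne_zero_of_interior hne)
      (T.sub_ne_zero_at_left_or_right hne)).subset fun t ⟨hleft, hright, heq⟩ =>
        ⟨mem_Ioo_max_min_natCast hleft hright, by rw [linearInterp_sub, heq, sub_self]⟩
  sign_change i j k l _ _ hne t hleft hright heq := by
    obtain ⟨ε, hε, hsign⟩ := exists_sign_change_linearInterp (T.sub_ne_zero_of_interior hne)
      (T.sub_ne_zero_at_left_or_right hne) (mem_Ioo_max_min_natCast hleft hright)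
      (by rw [linearInterp_sub, heq, sub_self])
    refine ⟨ε, hε, fun s _ hεs hst u _ htu huε => ?_⟩
    simpa only [linearInterp_sub] using hsign s ⟨hεs, hst⟩ u ⟨htu, huε⟩

theorem drawing_edge_vertex (i j m : Fin n) :
    T.drawing.e i j (T.drawing.x m) = T.height i j m :=
  linearInterp_natCast _ _

theorem sig_drawing : T.drawing.sig i j k = true ↔ 0 < T.height i k j := by
  rw [XMonotoneDrawing.sig_eq_true_iff, drawing_edge_vertex]

/-- The edge `{i, j}` is nowhere above the edge `{k, l}` on their common range. -/
def Le (i j k l : Fin n) : Prop :=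
  ∀ m : ℕ, i ≤ m → k ≤ m → m ≤ j → m ≤ l → T.height i j m ≤ T.height k l m

variable {T}

theorem Le.mul_nonneg {m : ℕ} (hle : T.Le i j k l) (him : i ≤ m) (hkm : k ≤ m) (hmj : m < j)
    (hml : m < l) :
    0 ≤ (T.height i j m - T.height k l m) * (T.height i j (m + 1) - T.height k l (m + 1)) :=
  mul_nonneg_of_nonpos_of_nonpos (sub_nonpos.2 (hle m him hkm hmj.le hml.le))
    (sub_nonpos.2 (hle (m + 1) (by omega) (by omega) hmj hml))

theorem crossSet_drawing_eq_empty (hne : (i, j) ≠ (k, l))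
    (hle : T.Le i j k l ∨ T.Le k l i j) : T.drawing.crossSet i j k l = ∅ := by
  refine Set.eq_empty_of_forall_notMem fun t ⟨hleft, hright, heq⟩ => ?_
  have ht : t ∈ Set.Ioo _ _ := mem_Ioo_max_min_natCast hleft hright
  have hneg := mul_neg_of_linearInterp_eq_zero (T.sub_ne_zero_of_interior hne)
    (T.sub_ne_zero_at_left_or_right hne) ht (by rw [linearInterp_sub, sub_eq_zero]; exact heq)
  have hmax : max (i : ℕ) k ≤ ⌊t⌋₊ := Nat.le_floor ht.1.le
  have hmin : ⌊t⌋₊ < min (j : ℕ) l :=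
    (Nat.floor_lt ((Nat.cast_nonneg _).trans ht.1.le)).2 ht.2
  rw [max_le_iff] at hmax
  rw [lt_min_iff] at hmin
  rcases hle with hle | hle
  · exact hneg.not_ge (hle.mul_nonneg hmax.1 hmax.2 hmin.1 hmin.2)
  · rw [← neg_mul_neg, neg_sub, neg_sub] at hneg
    exact hneg.not_ge (hle.mul_nonneg hmax.2 hmax.1 hmin.2 hmin.1)

theorem semisimple_drawing
    (hcommon_left : ∀ i j k : Fin n, i < j → i < k → j ≠ k → T.Le i j i k ∨ T.Le i k i j)
    (hcommon_right : ∀ i j k : Fin n, i < k → j < k → i ≠ j → T.Le i k j k ∨ T.Le j k i k) :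
    T.drawing.Semisimple := by
  intro i j k l hij hkl hne hadj
  rw [XMonotoneDrawing.crossCount_eq_zero_iff hij hkl hne]
  rcases hadj with rfl | rfl | rfl | rfl
  · exact crossSet_drawing_eq_empty hne (hcommon_left i j l hij hkl (by rintro rfl; simp at hne))
  · refine Set.eq_empty_of_forall_notMem fun t ⟨hleft, hright, _⟩ => ?_
    exact (lt_min_iff.1 hright).2.not_gt (max_lt_iff.1 hleft).1
  · refine Set.eq_empty_of_forall_notMem fun t ⟨hleft, hright, _⟩ => ?_
    exact (lt_min_iff.1 hright).1.not_gt (max_lt_iff.1 hleft).2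
  · exact crossSet_drawing_eq_empty hne (hcommon_right i k j hij hkl (by rintro rfl; simp at hne))

end HeightTable

section BalancedTernary

variable {K : Type*} [Field K] [LinearOrder K] [IsStrictOrderedRing K]

/-- The number with balanced ternary expansion `s m . s (m - 1) … s 0`, followed by the remainder
`r` in place of the later digits. Since a lower digit has less weight, these numbers are ordered
lexicographically, starting with the digit `s m`. -/
def balancedTernary (r : K) (s : ℕ → SignType) : ℕ → K
  | 0 => s 0 + r / 3
  | m + 1 => s (m + 1) + balancedTernary r s m / 3

variable {r r' : K} {s s' : ℕ → SignType} {k m : ℕ}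

theorem abs_signType_add_div_three_lt {v : K} (d : SignType) (hv : |v| < 3 / 2) :
    |(d : K) + v / 3| < 3 / 2 := by
  rw [abs_lt] at hv ⊢
  cases d <;> simp <;> constructor <;> linarith

theorem abs_balancedTernary_lt (hr : |r| < 3 / 2) (s : ℕ → SignType) (m : ℕ) :
    |balancedTernary r s m| < 3 / 2 := by
  induction m with
  | zero => exact abs_signType_add_div_three_lt _ hr
  | succ m ih => exact abs_signType_add_div_three_lt _ ih

theorem exists_balancedTernary_eq (hr : |r| < 3 / 2) (s : ℕ → SignType) (m : ℕ) :
    ∃ v : K, |v| < 3 / 2 ∧ balancedTernary r s m = s m + v / 3 := by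
  cases m with
  | zero => exact ⟨r, hr, rfl⟩
  | succ m => exact ⟨_, abs_balancedTernary_lt hr s m, rfl⟩

theorem sign_balancedTernary (hr : |r| < 3 / 2) (hs : s m ≠ 0) :
    SignType.sign (balancedTernary r s m) = s m := by
  obtain ⟨v, hv, heq⟩ := exists_balancedTernary_eq hr s m
  rw [abs_lt] at hv
  rw [heq]
  cases hsm : s m
  · exact absurd hsm hs
  · exact sign_neg (by simp; linarith)
  · exact sign_pos (by simp; linarith)

theorem balancedTernary_lt_of_lt (hr : |r| < 3 / 2) (hr' : |r'| < 3 / 2) (hlt : s m < s' m) :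
    balancedTernary r s m < balancedTernary r' s' m := by
  obtain ⟨v, hv, heq⟩ := exists_balancedTernary_eq hr s m
  obtain ⟨v', hv', heq'⟩ := exists_balancedTernary_eq hr' s' m
  rw [abs_lt] at hv hv'
  have hdigits : (s m : K) + 1 ≤ s' m := by
    revert hlt
    cases s m <;> cases s' m <;> simp +decide
  linarith

theorem signType_cast_le_cast {d d' : SignType} (hle : d ≤ d') : (d : K) ≤ d' := by
  revert hle
  cases d <;> cases d' <;> simp +decide

theorem balancedTernary_lt_of_le (hr : r < r') (hle : ∀ l ≤ m, s l ≤ s' l) :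
    balancedTernary r s m < balancedTernary r' s' m := by
  induction m with
  | zero => exact add_lt_add_of_le_of_lt (signType_cast_le_cast (hle 0 le_rfl)) (by gcongr)
  | succ m ih =>
    have ih := ih fun l hl => hle l (by omega)
    exact add_lt_add_of_le_of_lt (signType_cast_le_cast (hle (m + 1) le_rfl)) (by gcongr)

theorem balancedTernary_lt_of_lt_of_le (hr : |r| < 3 / 2) (hr' : |r'| < 3 / 2) (hkm : k ≤ m)
    (hlt : s k < s' k) (hle : ∀ l, k < l → l ≤ m → s l ≤ s' l) :
    balancedTernary r s m < balancedTernary r' s' m := by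
  induction m, hkm using Nat.le_induction with
  | base => exact balancedTernary_lt_of_lt hr hr' hlt
  | succ m hkm ih =>
    have ih := ih fun l hkl hlm => hle l hkl (by omega)
    exact add_lt_add_of_le_of_lt (signType_cast_le_cast (hle (m + 1) (by omega) le_rfl))
      (by gcongr)

theorem balancedTernary_ne (hr : |r| < 3 / 2) (hr' : |r'| < 3 / 2) (hkm : k ≤ m)
    (hne : s k ≠ s' k) : balancedTernary r s m ≠ balancedTernary r' s' m := by
  have ne_of_digit_ne {l : ℕ} (hl : s l ≠ s' l) :
      balancedTernary r s l ≠ balancedTernary r' s' l := by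
    rcases hl.lt_or_gt with hlt | hgt
    · exact (balancedTernary_lt_of_lt hr hr' hlt).ne
    · exact (balancedTernary_lt_of_lt hr' hr hgt).ne'
  induction m, hkm using Nat.le_induction with
  | base => exact ne_of_digit_ne hne
  | succ m _ ih =>
    by_cases hdigit : s (m + 1) = s' (m + 1)
    · simpa [balancedTernary, hdigit] using ih
    · exact ne_of_digit_ne hdigit

end BalancedTernary

namespace Sig

variable {n : ℕ} {σ : Fin n → Fin n → Fin n → Bool} {i j k l : Fin n} {m : ℕ}

theorem below_iff_of_lt (hjk : j < k) : Below σ i j k ↔ σ i j k = true := by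
  simp [Below, hjk, hjk.not_gt]

theorem below_iff_of_gt (hkj : k < j) : Below σ i j k ↔ σ i k j = false := by
  simp [Below, hkj, hkj.not_gt]

theorem not_below_self (σ : Fin n → Fin n → Fin n → Bool) (i j : Fin n) : ¬Below σ i j j := by
  simp [Below]

theorem Below.ne (h : Below σ i j k) : j ≠ k := by
  rintro rfl
  exact not_below_self σ i j h

theorem below_comm_iff_not (hjk : j ≠ k) : Below σ i k j ↔ ¬Below σ i j k := by
  rcases hjk.lt_or_gt with hlt | hgt
  · simp [below_iff_of_lt hlt, below_iff_of_gt hlt]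
  · simp [below_iff_of_lt hgt, below_iff_of_gt hgt]

theorem below_or_below (hjk : j ≠ k) : Below σ i j k ∨ Below σ i k j := by
  rw [below_comm_iff_not hjk]
  exact em _

theorem Admissible.eq_of_common_left (hσ : Admissible σ) {a b c d : Fin n} (hab : a < b)
    (hbc : b < c) (hcd : c < d) (heq : σ a b c = σ a c d) : σ a b d = σ a b c :=
  ((allowedForm_iff _ _ _ _).1 (hσ a b c d hab hbc hcd)).1 heq

theorem Admissible.eq_of_common_right (hσ : Admissible σ) {a b c d : Fin n} (hab : a < b)
    (hbc : b < c) (hcd : c < d) (heq : σ a b d = σ b c d) : σ a c d = σ a b d :=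
  ((allowedForm_iff _ _ _ _).1 (hσ a b c d hab hbc hcd)).2 heq

theorem Admissible.not_below_cycle_of_lt (hσ : Admissible σ) (hij : i < j) (hjk : j < k)
    (hjl : j < l) (hbelow_jk : Below σ i j k) (hbelow_kl : Below σ i k l) : ¬Below σ i l j := by
  intro hbelow_lj
  have hjk_true := (below_iff_of_lt hjk).1 hbelow_jk
  have hjl_false := (below_iff_of_gt hjl).1 hbelow_lj
  rcases hbelow_kl.ne.lt_or_gt with hkl | hlk
  · have heq := hσ.eq_of_common_left hij hjk hkl
    simp [hjk_true, hjl_false, (below_iff_of_lt hkl).1 hbelow_kl] at heq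
  · have heq := hσ.eq_of_common_left hij hjl hlk
    simp [hjk_true, hjl_false, (below_iff_of_gt hlk).1 hbelow_kl] at heq

theorem Admissible.below_trans (hσ : Admissible σ) (hij : i < j) (hik : i < k) (hil : i < l)
    (hjk : Below σ i j k) (hkl : Below σ i k l) : Below σ i j l := by
  have hjl : j ≠ l := by
    rintro rfl
    exact (below_comm_iff_not hkl.ne).1 hjk hkl
  rw [below_comm_iff_not hjl.symm]
  intro hlj
  have hleast : j < k ∧ j < l ∨ k < l ∧ k < j ∨ l < j ∧ l < k := by
    have hjk_ne := hjk.ne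
    have hkl_ne := hkl.ne
    omega
  rcases hleast with ⟨hlt, hlt'⟩ | ⟨hlt, hlt'⟩ | ⟨hlt, hlt'⟩
  · exact hσ.not_below_cycle_of_lt hij hlt hlt' hjk hkl hlj
  · exact hσ.not_below_cycle_of_lt hik hlt hlt' hkl hlj hjk
  · exact hσ.not_below_cycle_of_lt hil hlt hlt' hlj hjk hkl

/-- The proportion of vertices to the right of `i` that precede `j` in the order `⋖`. It is the
height by which the edge `{i, j}` starts from `v i`, relative to the other edges from `v i` to the
right. -/
noncomputable def startRank (σ : Fin n → Fin n → Fin n → Bool) (i j : Fin n) : ℝ :=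
  open Classical in (Finset.univ.filter fun k => i < k ∧ Below σ i k j).card / n

theorem abs_startRank_lt (σ : Fin n → Fin n → Fin n → Bool) (i j : Fin n) :
    |startRank σ i j| < 3 / 2 := by
  have hle : startRank σ i j ≤ 1 :=
    div_le_one_of_le₀ (mod_cast (Finset.card_le_univ _).trans_eq (Fintype.card_fin n))
      n.cast_nonneg
  rw [abs_of_nonneg (div_nonneg (Nat.cast_nonneg _) n.cast_nonneg)]
  linarith

theorem Admissible.startRank_lt (hσ : Admissible σ) (hij : i < j) (hik : i < k)
    (hjk : Below σ i j k) : startRank σ i j < startRank σ i k := by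
  refine div_lt_div_of_pos_right (Nat.cast_lt.2 (Finset.card_lt_card ?_))
    (Nat.cast_pos.2 i.pos)
  rw [Finset.ssubset_iff_of_subset]
  · exact ⟨j, by simp [hij, hjk], by simp [not_below_self]⟩
  · intro l
    simp only [Finset.mem_filter_univ]
    exact fun ⟨hil, hlj⟩ => ⟨hil, hσ.below_trans hil hij hik hlj hjk⟩

/-- The side of the vertex `v m` on which the edge `{i, j}` passes: `1` above, `-1` below, and `0`
if `v m` is not strictly between the endpoints of the edge. -/
def side (σ : Fin n → Fin n → Fin n → Bool) (i j : Fin n) (m : ℕ) : SignType :=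
  if h : i < m ∧ m < j then (if σ i ⟨m, h.2.trans j.isLt⟩ j then 1 else -1) else 0

theorem side_coe {m : Fin n} (him : i < m) (hmj : m < j) :
    side σ i j m = if σ i m j then 1 else -1 :=
  dif_pos ⟨him, hmj⟩

theorem side_eq_zero_iff : side σ i j m = 0 ↔ ¬(i < m ∧ m < j) := by
  unfold side
  split_ifs <;> simp_all

theorem side_eq_zero_of_le_left (hmi : m ≤ i) : side σ i j m = 0 :=
  side_eq_zero_iff.2 (by omega)

theorem side_eq_zero_of_le_right (hjm : j ≤ m) : side σ i j m = 0 :=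
  side_eq_zero_iff.2 (by omega)

theorem Admissible.side_le_of_below (hσ : Admissible σ) (hij : i < j) (hik : i < k)
    (hjk : Below σ i j k) (hmj : m ≤ j) (hmk : m ≤ k) : side σ i j m ≤ side σ i k m := by
  rcases le_or_gt m i with hmi | him
  · rw [side_eq_zero_of_le_left hmi, side_eq_zero_of_le_left hmi]
  lift m to Fin n using hmj.trans_lt j.isLt
  norm_cast at hmj hmk him
  rcases hmj.eq_or_lt with rfl | hmj
  · have hmk := hmk.lt_of_ne hjk.ne
    rw [side_eq_zero_of_le_right le_rfl, side_coe him hmk, (below_iff_of_lt hmk).1 hjk]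
    decide
  rw [side_coe him hmj]
  cases hside : σ i m j
  · exact SignType.neg_one_le _
  rcases hmk.eq_or_lt with rfl | hmk
  · exact absurd ((below_iff_of_gt hmj).1 hjk) (by simp [hside])
  · have hbelow := hσ.below_trans him hij hik ((below_iff_of_lt hmj).2 hside) hjk
    rw [side_coe him hmk, (below_iff_of_lt hmk).1 hbelow]

theorem Admissible.side_le_of_eq_true (hσ : Admissible σ) (hij : i < j) (hjk : j < k)
    (hsign : σ i j k = true) (hjm : j ≤ m) : side σ j k m ≤ side σ i k m := by
  rcases le_or_gt (k : ℕ) m with hkm | hmk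
  · rw [side_eq_zero_of_le_right hkm, side_eq_zero_of_le_right hkm]
  lift m to Fin n using hmk.trans k.isLt
  norm_cast at hjm hmk
  rcases hjm.eq_or_lt with rfl | hjm
  · rw [side_eq_zero_of_le_left le_rfl, side_coe hij hjk, hsign]
    decide
  rw [side_coe hjm hmk, side_coe (hij.trans hjm) hmk]
  cases hside : σ j m k
  · exact SignType.neg_one_le _
  · rw [hσ.eq_of_common_right hij hjm hmk (hsign.trans hside.symm), hsign]

theorem Admissible.side_le_of_eq_false (hσ : Admissible σ) (hij : i < j) (hjk : j < k)
    (hsign : σ i j k = false) (hjm : j ≤ m) : side σ i k m ≤ side σ j k m := by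
  rcases le_or_gt (k : ℕ) m with hkm | hmk
  · rw [side_eq_zero_of_le_right hkm, side_eq_zero_of_le_right hkm]
  lift m to Fin n using hmk.trans k.isLt
  norm_cast at hjm hmk
  rcases hjm.eq_or_lt with rfl | hjm
  · rw [side_eq_zero_of_le_left le_rfl, side_coe hij hjk, hsign]
    decide
  rw [side_coe hjm hmk, side_coe (hij.trans hjm) hmk]
  cases hside : σ j m k
  · rw [hσ.eq_of_common_right hij hjm hmk (hsign.trans hside.symm), hsign]
  · exact SignType.le_one _

/-- The height at which the edge `{i, j}` passes the abscissa `m`. The first digit determines its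
sign, and it vanishes at the endpoints of the edge. -/
noncomputable def edgeHeight (σ : Fin n → Fin n → Fin n → Bool) (i j : Fin n) (m : ℕ) : ℝ :=
  if side σ i j m = 0 then 0 else balancedTernary (startRank σ i j) (side σ i j) m

theorem sign_edgeHeight (σ : Fin n → Fin n → Fin n → Bool) (i j : Fin n) (m : ℕ) :
    SignType.sign (edgeHeight σ i j m) = side σ i j m := by
  unfold edgeHeight
  split_ifs with hside
  · rw [hside, sign_zero]
  · exact sign_balancedTernary (abs_startRank_lt σ i j) hside

theorem edgeHeight_eq_zero_iff : edgeHeight σ i j m = 0 ↔ ¬(i < m ∧ m < j) := by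
  rw [← sign_eq_zero_iff, sign_edgeHeight, side_eq_zero_iff]

theorem edgeHeight_of_lt (him : i < m) (hmj : m < j) :
    edgeHeight σ i j m = balancedTernary (startRank σ i j) (side σ i j) m :=
  if_neg fun hside => side_eq_zero_iff.1 hside ⟨him, hmj⟩

theorem edgeHeight_le (hside : side σ i j m ≤ side σ k l m)
    (hternary : balancedTernary (startRank σ i j) (side σ i j) m ≤
      balancedTernary (startRank σ k l) (side σ k l) m) :
    edgeHeight σ i j m ≤ edgeHeight σ k l m := by
  by_cases hij : side σ i j m = 0
  · rw [edgeHeight, if_pos hij, ← sign_nonneg_iff, sign_edgeHeight]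
    exact hij.ge.trans hside
  by_cases hkl : side σ k l m = 0
  · rw [edgeHeight.eq_def σ k l, if_pos hkl, ← sign_nonpos_iff, sign_edgeHeight]
    exact hside.trans hkl.le
  · rwa [edgeHeight, edgeHeight, if_neg hij, if_neg hkl]

theorem Admissible.balancedTernary_lt_of_below (hσ : Admissible σ) (hij : i < j) (hik : i < k)
    (hjk : Below σ i j k) (hmj : m ≤ j) (hmk : m ≤ k) :
    balancedTernary (startRank σ i j) (side σ i j) m <
      balancedTernary (startRank σ i k) (side σ i k) m :=
  balancedTernary_lt_of_le (hσ.startRank_lt hij hik hjk) fun _ hl =>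
    hσ.side_le_of_below hij hik hjk (hl.trans hmj) (hl.trans hmk)

theorem Admissible.edgeHeight_le_of_below (hσ : Admissible σ) (hij : i < j) (hik : i < k)
    (hjk : Below σ i j k) (hmj : m ≤ j) (hmk : m ≤ k) :
    edgeHeight σ i j m ≤ edgeHeight σ i k m :=
  edgeHeight_le (hσ.side_le_of_below hij hik hjk hmj hmk)
    (hσ.balancedTernary_lt_of_below hij hik hjk hmj hmk).le

theorem Admissible.edgeHeight_le_of_eq_true (hσ : Admissible σ) (hij : i < j) (hjk : j < k)
    (hsign : σ i j k = true) (hjm : j ≤ m) : edgeHeight σ j k m ≤ edgeHeight σ i k m := by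
  have hlt : side σ j k j < side σ i k j := by
    rw [side_eq_zero_of_le_left le_rfl, side_coe hij hjk, hsign]
    decide
  exact edgeHeight_le (hσ.side_le_of_eq_true hij hjk hsign hjm)
    (balancedTernary_lt_of_lt_of_le (abs_startRank_lt σ j k) (abs_startRank_lt σ i k) hjm hlt
      fun l hl _ => hσ.side_le_of_eq_true hij hjk hsign hl.le).le

theorem Admissible.edgeHeight_le_of_eq_false (hσ : Admissible σ) (hij : i < j) (hjk : j < k)
    (hsign : σ i j k = false) (hjm : j ≤ m) : edgeHeight σ i k m ≤ edgeHeight σ j k m := by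
  have hlt : side σ i k j < side σ j k j := by
    rw [side_eq_zero_of_le_left le_rfl, side_coe hij hjk, hsign]
    decide
  exact edgeHeight_le (hσ.side_le_of_eq_false hij hjk hsign hjm)
    (balancedTernary_lt_of_lt_of_le (abs_startRank_lt σ i k) (abs_startRank_lt σ j k) hjm hlt
      fun l hl _ => hσ.side_le_of_eq_false hij hjk hsign hl.le).le

theorem edgeHeight_ne_of_lt (hik : i < k) (hkm : k < m) (hmj : m < j) (hml : m < l) :
    edgeHeight σ i j m ≠ edgeHeight σ k l m := by
  have hside : side σ i j k ≠ side σ k l k := by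
    rw [side_eq_zero_of_le_left (i := k) le_rfl, Ne, side_eq_zero_iff, not_not]
    omega
  rw [edgeHeight_of_lt (by omega) hmj, edgeHeight_of_lt hkm hml]
  exact balancedTernary_ne (abs_startRank_lt σ i j) (abs_startRank_lt σ k l) hkm.le hside

theorem Admissible.edgeHeight_ne_of_common_left (hσ : Admissible σ) (hjk : j ≠ k) (him : i < m)
    (hmj : m < j) (hmk : m < k) : edgeHeight σ i j m ≠ edgeHeight σ i k m := by
  have hij : i < j := by omega
  have hik : i < k := by omega
  rw [edgeHeight_of_lt him hmj, edgeHeight_of_lt him hmk]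
  rcases below_or_below (σ := σ) (i := i) hjk with hbelow | hbelow
  · exact (hσ.balancedTernary_lt_of_below hij hik hbelow hmj.le hmk.le).ne
  · exact (hσ.balancedTernary_lt_of_below hik hij hbelow hmk.le hmj.le).ne'

/-- The heights from which an admissible signature function is drawn. -/
noncomputable def Admissible.heightTable (hσ : Admissible σ) : HeightTable n where
  height := edgeHeight σ
  height_left i _ := edgeHeight_eq_zero_iff.2 fun h => lt_irrefl _ h.1
  height_right _ j := edgeHeight_eq_zero_iff.2 fun h => lt_irrefl _ h.2
  height_ne_zero i j m him hmj hzero := edgeHeight_eq_zero_iff.1 hzero ⟨him, hmj⟩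
  height_ne i j k l m hne him hmj hkm hml := by
    rcases lt_trichotomy i k with hik | rfl | hki
    · exact edgeHeight_ne_of_lt hik hkm hmj hml
    · exact hσ.edgeHeight_ne_of_common_left (by rintro rfl; exact hne rfl) him hmj hml
    · exact (edgeHeight_ne_of_lt hki him hml hmj).symm

theorem Admissible.semisimple_drawing (hσ : Admissible σ) : hσ.heightTable.drawing.Semisimple := by
  refine HeightTable.semisimple_drawing (fun i j k hij hik hjk => ?_) fun i j k hik hjk hij => ?_
  · exact (below_or_below hjk).imp
      (fun hbelow _ _ _ hmj hmk => hσ.edgeHeight_le_of_below hij hik hbelow hmj hmk)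
      (fun hbelow _ _ _ hmk hmj => hσ.edgeHeight_le_of_below hik hij hbelow hmk hmj)
  · wlog hlt : i < j generalizing i j
    · exact (this j i hjk hik hij.symm (hij.lt_or_gt.resolve_left hlt)).symm
    cases hsign : σ i j k
    · exact .inl fun _ _ hjm _ _ => hσ.edgeHeight_le_of_eq_false hlt hjk hsign hjm
    · exact .inr fun _ hjm _ _ _ => hσ.edgeHeight_le_of_eq_true hlt hjk hsign hjm

theorem Admissible.realizes_drawing (hσ : Admissible σ) : hσ.heightTable.drawing.Realizes σ := by
  intro i j k hij hjk
  rw [Bool.eq_iff_iff, HeightTable.sig_drawing, ← sign_eq_one_iff]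
  change SignType.sign (edgeHeight σ i k j) = 1 ↔ σ i j k = true
  rw [sign_edgeHeight, side_coe hij hjk]
  cases σ i j k <;> decide

end Sig

/-- A signature function `σ` on the triples of `[n]` is realizable by
a semisimple x-monotone drawing of `K n` if and only if `σ` is admissible (every
increasing 4-tuple is of one of the ten allowed forms). -/
theorem semisimple_realizable_iff_admissible (n : ℕ)
    (σ : Fin n → Fin n → Fin n → Bool) :
    (∃ D : XMonotoneDrawing n, D.Semisimple ∧ D.Realizes σ) ↔ Sig.Admissible σ := by
  constructor
  · rintro ⟨D, hD, hσ⟩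
    exact hD.admissible hσ
  · intro hσ
    exact ⟨hσ.heightTable.drawing, hσ.semisimple_drawing, hσ.realizes_drawing⟩
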